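/- For every n ∈ ℕ, the transformations T_n and T_{n+1}^- preserve well partial orders: if X is a well partial order, then T_n(X) and T_{n+1}^-(X) are well partial orders. -/

import Mathlib

universe u

/-- Terms for labelled trees: leaves carry labels from `X`, inner nodes carry
natural number labels and a (multi)set of immediate subtrees, represented as a list. -/
inductive TTerm (X : Type u) : Type u
  | leaf : X → TTerm X
  | node : ℕ → List (TTerm X) → TTerm X

namespace TTerm

/-- All node labels are `< n`. -/
inductive Bdd (n : ℕ) {X : Type u} : TTerm X → Prop
  | leaf (x : X) : Bdd n (leaf x)
  | node {i : ℕ} {l : List (TTerm X)} : i < n → (∀ t ∈ l, Bdd n t) → Bdd n (node i l)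

/-- The term is a leaf or has root label `0`. -/
def IsMinus {X : Type u} : TTerm X → Prop
  | leaf _ => True
  | node i _ => i = 0

/-- The recursively defined gap order `≤_{T_n(X)}`, relative to a relation `r`
on the leaf labels.  Lists of subtrees are compared as multisets: via an
injection that relates corresponding entries. -/
inductive TLE {X : Type u} (r : X → X → Prop) : TTerm X → TTerm X → Prop
  | leaf {x y : X} : r x y → TLE r (leaf x) (leaf y)
  | leaf_sub {x : X} {j : ℕ} {l : List (TTerm X)} {t : TTerm X} :
      t ∈ l → TLE r (leaf x) t → TLE r (leaf x) (node j l)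
  | node {i : ℕ} {l l' : List (TTerm X)} (g : Fin l.length → Fin l'.length) :
      Function.Injective g → (∀ k, TLE r (l.get k) (l'.get (g k))) →
      TLE r (node i l) (node i l')
  | node_sub {i j : ℕ} {σ : List (TTerm X)} {l : List (TTerm X)} {t : TTerm X} :
      i ≤ j → t ∈ l → TLE r (node i σ) t → TLE r (node i σ) (node j l)

/-- Equality of terms as labelled trees with multisets of subtrees, relative to a
relation `e` identifying leaf labels. -/
inductive TEquiv {X : Type u} (e : X → X → Prop) : TTerm X → TTerm X → Prop
  | leaf {x y : X} : e x y → TEquiv e (leaf x) (leaf y)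
  | node {i : ℕ} {l l' : List (TTerm X)} (g : Fin l.length → Fin l'.length) :
      Function.Bijective g → (∀ k, TEquiv e (l.get k) (l'.get (g k))) →
      TEquiv e (node i l) (node i l')

/-- The height of a term. -/
def height {X : Type u} : TTerm X → ℕ
  | leaf _ => 0
  | node _ l => (l.attach.map (fun t => height t.1)).foldr (fun a b => max (a + 1) b) 0
decreasing_by
  have := List.sizeOf_lt_of_mem t.2
  simp only [TTerm.node.sizeOf_spec]
  omega

/-- The support of a term: the set of its leaf labels. -/
def suppT {X : Type u} : TTerm X → Set X
  | leaf x => {x}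
  | node _ l => (l.attach.map (fun t => suppT t.1)).foldr (· ∪ ·) ∅
decreasing_by
  have := List.sizeOf_lt_of_mem t.2
  simp only [TTerm.node.sizeOf_spec]
  omega

/-- The action of `T_n` on maps. -/
def tmap {X Y : Type u} (f : X → Y) : TTerm X → TTerm Y
  | leaf x => leaf (f x)
  | node i l => node i (l.attach.map (fun t => tmap f t.1))
decreasing_by
  have := List.sizeOf_lt_of_mem t.2
  simp only [TTerm.node.sizeOf_spec]
  omega

end TTerm

open TTerm

/-- Well partial orders, for an explicit relation. -/
def IsWpoRel {X : Type u} (r : X → X → Prop) : Prop :=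
  ∀ f : ℕ → X, ∃ i j : ℕ, i < j ∧ r (f i) (f j)

/-!
A term of `T_{n+1}(X)` is a term of `T_n(T_{n+1}^-(X))`: cut it at its topmost subterms that are
leaves or have root label `0`, and lower the labels above the cuts by one. So if `T_n` preserves
well partial orders, it suffices to treat `T_{n+1}^-(X)`. There, take a bad sequence that is
minimal in the sense of Nash-Williams. The topmost cut points of the immediate subterms of its
members form a well partially ordered set `S`, by minimality. Hence `T_n(S)` is well partially
ordered, and so are the finite multisets over it by Higman's lemma; but the members of the
sequence are leaves or such multisets under the label `0`.
-/

section MinimalBadSequence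

variable {α : Type*} {r : α → α → Prop}

/-- The elements of `A` that have smaller rank than some `f k` and whose lower bounds in `A` are
also lower bounds of `f k`. When `f` is a minimal bad sequence in `A`, these are the elements that
may replace members of `f`. -/
def minorants (r : α → α → Prop) (rk : α → ℕ) (A : Set α) (f : ℕ → α) : Set α :=
  {y ∈ A | ∃ k, rk y < rk (f k) ∧ ∀ s ∈ A, r s y → r s (f k)}

open Set.PartiallyWellOrderedOn in
theorem partiallyWellOrderedOn_minorants {rk : α → ℕ} {A : Set α} {f : ℕ → α}
    (hf : IsBadSeq r A f) (hmin : ∀ k, IsMinBadSeq r rk A k f) :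
    (minorants r rk A f).PartiallyWellOrderedOn r := by
  rw [iff_forall_not_isBadSeq]
  rintro g ⟨hgS, hg⟩
  choose hgA φ hrk hle using hgS
  let k₀ := Function.argmin φ
  have hk₀ (k : ℕ) : φ k₀ ≤ φ k := Function.argmin_le φ k
  -- `f` up to position `φ k₀`, continued by `g` from position `k₀` on, contradicts minimality.
  refine hmin (φ k₀) (fun m => if m < φ k₀ then f m else g (k₀ + (m - φ k₀)))
    (fun m hm => (if_pos hm).symm) (by simpa using hrk k₀) ⟨fun m => ?_, fun m k hmk => ?_⟩
  · dsimp only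
    split_ifs
    · exact hf.1 m
    · exact hgA _
  · dsimp only
    split_ifs with hm hk hk
    · exact hf.2 m k hmk
    · exact fun h => hf.2 m _ (hm.trans_le (hk₀ _)) (hle _ _ (hf.1 m) h)
    · omega
    · exact hg _ _ (by omega)

open Set.PartiallyWellOrderedOn in
theorem partiallyWellOrderedOn_of_minorants (rk : α → ℕ) {A : Set α}
    (h : ∀ f : ℕ → α, (∀ k, f k ∈ A) → (minorants r rk A f).PartiallyWellOrderedOn r →
      (Set.range f).PartiallyWellOrderedOn r) :
    A.PartiallyWellOrderedOn r := by
  rw [iff_not_exists_isMinBadSeq rk]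
  rintro ⟨f, hf, hmin⟩
  obtain ⟨i, j, hij, hle⟩ :=
    (h f hf.1 (partiallyWellOrderedOn_minorants hf hmin)).exists_lt Set.mem_range_self
  exact hf.2 i j hij hle

end MinimalBadSequence

section MultisetLE

variable {α β γ δ : Type*}

/-- The relation between finite multisets, represented by lists, that holds if some injection
sends each entry of the first to an `R`-related entry of the second. -/
def MultisetLE (R : α → β → Prop) (l : List α) (l' : List β) : Prop :=
  ∃ g : Fin l.length → Fin l'.length, Function.Injective g ∧ ∀ k, R (l.get k) (l'.get (g k))

theorem MultisetLE.of_sublistForall₂ {R : α → β → Prop} {l : List α} {l' : List β}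
    (h : List.SublistForall₂ R l l') : MultisetLE R l l' := by
  obtain ⟨m, hlm, hml'⟩ := List.sublistForall₂_iff.1 h
  obtain ⟨hlen, hR⟩ := List.forall₂_iff_get.1 hlm
  obtain ⟨f, hf⟩ := List.sublist_iff_exists_fin_orderEmbedding_get_eq.1 hml'
  refine ⟨f ∘ Fin.cast hlen, f.injective.comp (Fin.cast_injective hlen), fun k => ?_⟩
  rw [Function.comp_apply, ← hf]
  exact hR k k.2 (hlen ▸ k.2)

theorem MultisetLE.map {R : γ → δ → Prop} {f : α → γ} {f' : β → δ} {l : List α} {l' : List β}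
    (h : MultisetLE (fun a b => R (f a) (f' b)) l l') :
    MultisetLE R (l.map f) (l'.map f') := by
  obtain ⟨g, hg, hR⟩ := h
  refine ⟨Fin.cast (List.length_map f').symm ∘ g ∘ Fin.cast (List.length_map f),
    (Fin.cast_injective _).comp (hg.comp (Fin.cast_injective _)), fun k => ?_⟩
  simpa using hR (Fin.cast (List.length_map f) k)

theorem partiallyWellOrderedOn_multisetLE {r : α → α → Prop} [IsPreorder α r] {s : Set α}
    (hs : s.PartiallyWellOrderedOn r) :
    {l : List α | ∀ x ∈ l, x ∈ s}.PartiallyWellOrderedOn (MultisetLE r) := by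
  intro f
  obtain ⟨i, j, hij, h⟩ := hs.partiallyWellOrderedOn_sublistForall₂ r f
  exact ⟨i, j, hij, .of_sublistForall₂ h⟩

end MultisetLE

theorem exists_list_map_eq_of_forall_mem_image {α β : Type*} {F : α → β} {s : Set α} {l : List β}
    (h : ∀ b ∈ l, b ∈ F '' s) : ∃ L : List α, (∀ a ∈ L, a ∈ s) ∧ L.map F = l := by
  have hl : l ∈ Set.range (List.map fun a : s => F a) := by
    rwa [Set.range_list_map, ← Set.image_eq_range]
  obtain ⟨L, rfl⟩ := hl
  exact ⟨L.map (↑), List.forall_mem_map.2 fun a _ => a.2, List.map_map⟩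

namespace TTerm

theorem sizeOf_lt_sizeOf_node {X : Type*} {t : TTerm X} {i : ℕ} {l : List (TTerm X)}
    (ht : t ∈ l) : sizeOf t < sizeOf (node i l) := by
  have := List.sizeOf_lt_of_mem ht
  simp only [node.sizeOf_spec]
  omega

section Preorder

variable {X : Type*} {r : X → X → Prop}

theorem TLE.node_of_multisetLE {i : ℕ} {l l' : List (TTerm X)} (h : MultisetLE (TLE r) l l') :
    TLE r (.node i l) (.node i l') :=
  let ⟨g, hg, hle⟩ := h
  .node g hg hle

theorem TLE.label_le {i j : ℕ} {l l' : List (TTerm X)} (h : TLE r (.node i l) (.node j l')) :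
    i ≤ j := by
  cases h with
  | node => exact le_rfl
  | node_sub hij => exact hij

theorem TLE.node_of_mem {s t : TTerm X} {j : ℕ} {l : List (TTerm X)} (hs : IsMinus s)
    (ht : t ∈ l) (h : TLE r s t) : TLE r s (.node j l) := by
  cases s with
  | leaf x => exact .leaf_sub ht h
  | node i σ =>
    obtain rfl : i = 0 := hs
    exact .node_sub j.zero_le ht h

protected theorem TLE.refl [Std.Refl r] : ∀ t : TTerm X, TLE r t t
  | .leaf x => .leaf (refl_of r x)
  | .node _ l => .node id Function.injective_id fun k => TLE.refl (l.get k)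
decreasing_by exact sizeOf_lt_sizeOf_node (List.get_mem _ k)

protected theorem TLE.trans [IsTrans X r] {a b c : TTerm X} (hab : TLE r a b)
    (hbc : TLE r b c) : TLE r a c := by
  induction hbc generalizing a with
  | leaf hyz =>
    cases hab with
    | leaf hxy => exact .leaf (trans_of r hxy hyz)
  | leaf_sub ht _ ih =>
    cases hab with
    | leaf hxy => exact .leaf_sub ht (ih (.leaf hxy))
  | node g hg _ ih =>
    cases hab with
    | leaf_sub ht hxt =>
      obtain ⟨k, rfl⟩ := List.get_of_mem ht
      exact .leaf_sub (List.get_mem _ (g k)) (ih k hxt)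
    | node g' hg' hle => exact .node (g ∘ g') (hg.comp hg') fun k => ih _ (hle k)
    | node_sub hij ht hat =>
      obtain ⟨k, rfl⟩ := List.get_of_mem ht
      exact .node_sub hij (List.get_mem _ (g k)) (ih k hat)
  | node_sub hij ht _ ih =>
    cases a with
    | leaf x => exact .leaf_sub ht (ih hab)
    | node i σ => exact .node_sub (hab.label_le.trans hij) ht (ih hab)

instance [IsPreorder X r] : IsPreorder (TTerm X) (TLE r) where
  refl := TLE.refl
  trans _ _ _ := TLE.trans

theorem partiallyWellOrderedOn_range_leaf (hr : WellQuasiOrdered r) :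
    (Set.range (leaf : X → TTerm X)).PartiallyWellOrderedOn (TLE r) := by
  rw [← Set.image_univ]
  exact (Set.partiallyWellOrderedOn_univ_iff.2 hr).image_of_monotone_on fun _ _ _ _ => .leaf

end Preorder

section MinusPart

variable {X : Type*} {y t : TTerm X}

/-- `y` is a topmost subterm of `t` that is a leaf or has root label `0`. In the reading of
`t ∈ T_{n+1}(X)` as a term over `T_{n+1}^-(X)`, these are the leaf labels. -/
inductive IsMinusPart (y : TTerm X) : TTerm X → Prop
  | self : IsMinus y → IsMinusPart y y
  | child {i : ℕ} {l : List (TTerm X)} {t : TTerm X} : t ∈ l → IsMinusPart y t →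
      IsMinusPart y (node (i + 1) l)

theorem IsMinusPart.isMinus (h : IsMinusPart y t) : IsMinus y := by
  induction h with
  | self hy => exact hy
  | child _ _ ih => exact ih

theorem IsMinusPart.sizeOf_le (h : IsMinusPart y t) : sizeOf y ≤ sizeOf t := by
  induction h with
  | self => exact le_rfl
  | child ht _ ih => exact ih.trans (sizeOf_lt_sizeOf_node ht).le

theorem IsMinusPart.bdd {n : ℕ} (h : IsMinusPart y t) (ht : Bdd n t) : Bdd n y := by
  induction h with
  | self => exact ht
  | child hmem _ ih =>
    cases ht with
    | node _ hl => exact ih (hl _ hmem)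

theorem IsMinusPart.tle {r : X → X → Prop} {s : TTerm X} (h : IsMinusPart y t) (hs : IsMinus s)
    (hsy : TLE r s y) : TLE r s t := by
  induction h with
  | self => exact hsy
  | child hmem _ ih => exact .node_of_mem hs hmem ih

theorem IsMinusPart.mem_minorants {r : X → X → Prop} {n k : ℕ} {f : ℕ → TTerm X}
    {l : List (TTerm X)} (h : IsMinusPart y t) (ht : t ∈ l) (hk : f k = node 0 l)
    (hl : ∀ u ∈ l, Bdd n u) :
    y ∈ minorants (TLE r) sizeOf {u | Bdd n u ∧ IsMinus u} f := by
  refine ⟨⟨h.bdd (hl t ht), h.isMinus⟩, k, ?_, fun s hs hsy => ?_⟩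
  · rw [hk]
    exact h.sizeOf_le.trans_lt (sizeOf_lt_sizeOf_node ht)
  · rw [hk]
    exact .node_of_mem hs.2 ht (h.tle hs.2 hsy)

end MinusPart

section Graft

variable {X Y : Type*}

/-- Substitute the terms `e y` for the leaves `y` and raise the labels of the inner nodes by one.
For the inclusion `e` of `T_{n+1}^-(X)` this is the bijection from `T_n(T_{n+1}^-(X))` to
`T_{n+1}(X)`. -/
def graft (e : Y → TTerm X) : TTerm Y → TTerm X
  | leaf y => e y
  | node i l => node (i + 1) (l.attach.map fun t => graft e t.1)
decreasing_by exact sizeOf_lt_sizeOf_node t.2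

theorem graft_leaf (e : Y → TTerm X) (y : Y) : graft e (leaf y) = e y := by
  rw [graft]

theorem graft_node (e : Y → TTerm X) (i : ℕ) (l : List (TTerm Y)) :
    graft e (node i l) = node (i + 1) (l.map (graft e)) := by
  rw [graft, List.attach_map_val]

theorem graft_mono {q : Y → Y → Prop} {r : X → X → Prop} {e : Y → TTerm X}
    (hminus : ∀ y, IsMinus (e y)) (hmono : ∀ y z, q y z → TLE r (e y) (e z)) {s t : TTerm Y}
    (h : TLE q s t) : TLE r (graft e s) (graft e t) := by
  induction h with
  | leaf hyz =>
    rw [graft_leaf, graft_leaf]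
    exact hmono _ _ hyz
  | leaf_sub ht _ ih =>
    rw [graft_leaf] at ih ⊢
    rw [graft_node]
    exact .node_of_mem (hminus _) (List.mem_map_of_mem ht) ih
  | node g hg _ ih =>
    rw [graft_node, graft_node]
    exact .node_of_multisetLE (.map ⟨g, hg, ih⟩)
  | node_sub hij ht _ ih =>
    rw [graft_node] at ih ⊢
    rw [graft_node]
    exact .node_sub (Nat.succ_le_succ hij) (List.mem_map_of_mem ht) ih

theorem mem_image_graft {n : ℕ} {e : Y → TTerm X} {t : TTerm X} (ht : Bdd (n + 1) t)
    (hpart : ∀ y, IsMinusPart y t → y ∈ Set.range e) : t ∈ graft e '' {s | Bdd n s} := by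
  have of_isMinus {u : TTerm X} (hu : IsMinus u) (hpart : ∀ y, IsMinusPart y u → y ∈ Set.range e) :
      u ∈ graft e '' {s | Bdd n s} := by
    obtain ⟨y, rfl⟩ := hpart u (.self hu)
    exact ⟨leaf y, .leaf y, graft_leaf e y⟩
  induction ht with
  | leaf x => exact of_isMinus trivial hpart
  | @node i l hi _ ih =>
    cases i with
    | zero => exact of_isMinus rfl hpart
    | succ i =>
      obtain ⟨L, hL, rfl⟩ := exists_list_map_eq_of_forall_mem_image fun t ht =>
        ih t ht fun y hy => hpart y (.child ht hy)
      exact ⟨node i L, .node (Nat.lt_of_succ_lt_succ hi) hL, graft_node e i L⟩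

end Graft

section PreservesWqo

/-- The transformation `T_n` preserves well quasi-orders. -/
def PreservesWqo (n : ℕ) : Prop :=
  ∀ (X : Type u) (r : X → X → Prop) [IsPreorder X r], WellQuasiOrdered r →
    {t : TTerm X | Bdd n t}.PartiallyWellOrderedOn (TLE r)

variable {n : ℕ} {X : Type u} {r : X → X → Prop} [IsPreorder X r]

theorem PreservesWqo.partiallyWellOrderedOn_isMinusPart_mem (hn : PreservesWqo.{u} n)
    {S : Set (TTerm X)} (hS : S.PartiallyWellOrderedOn (TLE r)) :
    {t | Bdd (n + 1) t ∧ ∀ y, IsMinusPart y t → y ∈ S}.PartiallyWellOrderedOn (TLE r) := by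
  let M : Set (TTerm X) := {y ∈ S | IsMinus y}
  have hM : M.PartiallyWellOrderedOn (TLE r) := hS.mono (Set.sep_subset S IsMinus)
  have himage : (graft ((↑) : M → TTerm X) '' {s | Bdd n s}).PartiallyWellOrderedOn (TLE r) :=
    (hn M (Subrel (TLE r) (· ∈ M)) hM).image_of_monotone_on
      fun _ _ _ _ => graft_mono (fun y => y.2.2) fun _ _ h => h
  refine himage.mono fun t ⟨ht, hpart⟩ => mem_image_graft ht fun y hy => ?_
  exact ⟨⟨y, hpart y hy, hy.isMinus⟩, rfl⟩

theorem PreservesWqo.partiallyWellOrderedOn_isMinus (hn : PreservesWqo.{u} n)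
    (hr : WellQuasiOrdered r) :
    {t : TTerm X | Bdd (n + 1) t ∧ IsMinus t}.PartiallyWellOrderedOn (TLE r) := by
  refine partiallyWellOrderedOn_of_minorants sizeOf fun f hf hS => ?_
  have hnode := (partiallyWellOrderedOn_multisetLE
    (hn.partiallyWellOrderedOn_isMinusPart_mem hS)).image_of_monotone_on (f := node 0)
      fun _ _ _ _ => TLE.node_of_multisetLE
  refine ((partiallyWellOrderedOn_range_leaf hr).union hnode).mono (Set.range_subset_iff.2 ?_)
  intro k
  obtain ⟨hb, hminus⟩ := hf k
  cases hk : f k with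
  | leaf x => exact .inl ⟨x, rfl⟩
  | node i l =>
    rw [hk] at hb hminus
    obtain rfl : i = 0 := hminus
    cases hb with
    | node _ hl =>
      exact .inr ⟨l, fun t ht => ⟨hl t ht, fun y hy => hy.mem_minorants ht hk hl⟩, rfl⟩

theorem preservesWqo_zero : PreservesWqo.{u} 0 := by
  intro X r _ hr
  refine (partiallyWellOrderedOn_range_leaf hr).mono fun t ht => ?_
  cases ht with
  | leaf x => exact ⟨x, rfl⟩
  | node hi => exact absurd hi (Nat.not_lt_zero _)

theorem PreservesWqo.succ (hn : PreservesWqo.{u} n) : PreservesWqo.{u} (n + 1) := by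
  intro X r _ hr
  refine (hn.partiallyWellOrderedOn_isMinusPart_mem (hn.partiallyWellOrderedOn_isMinus hr)).mono ?_
  exact fun t ht => ⟨ht, fun y hy => ⟨hy.bdd ht, hy.isMinus⟩⟩

theorem preservesWqo (n : ℕ) : PreservesWqo.{u} n := by
  induction n with
  | zero => exact preservesWqo_zero
  | succ n ih => exact ih.succ

end PreservesWqo

end TTerm

theorem tn_tnMinus_preserve_wpo_general (n : ℕ) {X : Type u} {r : X → X → Prop} [IsPreorder X r]
    (hr : IsWpoRel r) :
    IsWpoRel (fun s t : {t : TTerm X // TTerm.Bdd n t} => TLE r s.1 t.1) ∧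
    IsWpoRel (fun s t : {t : TTerm X // TTerm.Bdd (n + 1) t ∧ TTerm.IsMinus t} =>
      TLE r s.1 t.1) :=
  ⟨preservesWqo n X r hr, (preservesWqo n).partiallyWellOrderedOn_isMinus hr⟩

/-- `T_n` and `T_{n+1}^-` preserve well partial orders. -/
theorem tn_tnMinus_preserve_wpo (n : ℕ) (X : Type u) [PartialOrder X]
    (hX : IsWpoRel ((· ≤ ·) : X → X → Prop)) :
    IsWpoRel (fun s t : {t : TTerm X // TTerm.Bdd n t} => TLE (· ≤ ·) s.1 t.1) ∧
    IsWpoRel (fun s t : {t : TTerm X // TTerm.Bdd (n + 1) t ∧ TTerm.IsMinus t} =>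
      TLE (· ≤ ·) s.1 t.1) := by
  exact tn_tnMinus_preserve_wpo_general n hX
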